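/- arXiv:1205.6727 — 4 statements merged into one kernel-verified Lean document; each statement's English description precedes it below -/
import Mathlib

section
/- For every p ∈ ℝⁿ, with q = 2f(p) − p, the following identities hold: Σ_{i,j=1}^n A_{ij} e^{p_i − q_j} = Σ_{i,j=1}^n A_{ij} e^{p_i − p_j} = Σ_{i,j=1}^n A_{ij} e^{q_i − p_j}. -/
open BigOperators

/-- The ideal HOTS map. -/
noncomputable def hotsMap {n : ℕ} (A : Matrix (Fin n) (Fin n) ℝ) (x : Fin n → ℝ) : Fin n → ℝ :=
  fun i => (1 / 2) * (Real.log (∑ j, A j i * Real.exp (x j))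
    - Real.log (∑ j, A i j * Real.exp (-(x j))))

/-!
With `p` fixed, the vertex `i` has equal out-flow `∑ j, A i j * e ^ (s - p j)` and in-flow
`∑ j, A j i * e ^ (p j - t)` exactly when `s + t = 2 * hotsMap A p i`. This condition is symmetric
in `s` and `t`, so it holds both for `(s, t) = (p i, q i)` and for `(s, t) = (q i, p i)`, where
`q = 2 * hotsMap A p - p`; summing over `i` gives the two identities.
-/

theorem exp_mul_eq_exp_mul_iff {s t a b : ℝ} (ha : 0 < a) (hb : 0 < b) :
    Real.exp s * a = Real.exp t * b ↔ s - t = Real.log b - Real.log a := by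
  rw [sub_eq_sub_iff_add_eq_add, add_comm (Real.log b) t, ← Real.exp_eq_exp (x := s + _),
    Real.exp_add, Real.exp_add, Real.exp_log ha, Real.exp_log hb]

section WeightedExpSum

variable {ι : Type*} [Fintype ι]

theorem sum_mul_exp_pos {a : ι → ℝ} (ha : ∀ j, 0 ≤ a j) (hpos : ∃ j, 0 < a j) (x : ι → ℝ) :
    0 < ∑ j, a j * Real.exp (x j) := by
  obtain ⟨j, hj⟩ := hpos
  exact Finset.sum_pos' (fun k _ => mul_nonneg (ha k) (Real.exp_nonneg _))
    ⟨j, Finset.mem_univ j, mul_pos hj (Real.exp_pos _)⟩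

theorem sum_mul_exp_add (a x : ι → ℝ) (s : ℝ) :
    ∑ j, a j * Real.exp (s + x j) = Real.exp s * ∑ j, a j * Real.exp (x j) := by
  simp only [Real.exp_add, Finset.mul_sum, mul_left_comm]

end WeightedExpSum

theorem sum_row_eq_sum_col_iff_add_eq_two_mul_hotsMap {n : ℕ} {A : Matrix (Fin n) (Fin n) ℝ}
    {i : Fin n} (hA_row : ∀ j, 0 ≤ A i j) (hA_col : ∀ j, 0 ≤ A j i)
    (hrow : ∃ j, 0 < A i j) (hcol : ∃ j, 0 < A j i) (p : Fin n → ℝ) {s t : ℝ} :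
    ∑ j, A i j * Real.exp (s - p j) = ∑ j, A j i * Real.exp (p j - t) ↔
      s + t = 2 * hotsMap A p i := by
  have row_pos : 0 < ∑ j, A i j * Real.exp (-p j) := sum_mul_exp_pos hA_row hrow _
  have col_pos : 0 < ∑ j, A j i * Real.exp (p j) := sum_mul_exp_pos hA_col hcol p
  have two_mul_hotsMap : 2 * hotsMap A p i =
      Real.log (∑ j, A j i * Real.exp (p j)) - Real.log (∑ j, A i j * Real.exp (-p j)) := by
    rw [hotsMap, ← mul_assoc, mul_one_div_cancel two_ne_zero, one_mul]
  simp only [sub_eq_neg_add (p _) t, sub_eq_add_neg s (p _)]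
  rw [sum_mul_exp_add, sum_mul_exp_add, exp_mul_eq_exp_mul_iff row_pos col_pos,
    sub_neg_eq_add, two_mul_hotsMap]

/-- With `q = 2f(p) − p` one has
`Σ A_{ij} e^{p_i − q_j} = Σ A_{ij} e^{p_i − p_j} = Σ A_{ij} e^{q_i − p_j}`. -/
theorem hots_symmetry_identities {n : ℕ} (A : Matrix (Fin n) (Fin n) ℝ)
    (hA : ∀ i j, 0 ≤ A i j)
    (hrow : ∀ i, ∃ j, 0 < A i j) (hcol : ∀ j, ∃ i, 0 < A i j) (p : Fin n → ℝ) :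
    (∑ i, ∑ j, A i j * Real.exp (p i - (2 * hotsMap A p j - p j)) =
      ∑ i, ∑ j, A i j * Real.exp (p i - p j)) ∧
    (∑ i, ∑ j, A i j * Real.exp ((2 * hotsMap A p i - p i) - p j) =
      ∑ i, ∑ j, A i j * Real.exp (p i - p j)) := by
  have balance (i : Fin n) {s t : ℝ} (h : s + t = 2 * hotsMap A p i) :
      ∑ j, A i j * Real.exp (s - p j) = ∑ j, A j i * Real.exp (p j - t) :=
    (sum_row_eq_sum_col_iff_add_eq_two_mul_hotsMap (hA i) (hA · i) (hrow i) (hcol i) p).mpr h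
  constructor
  · rw [Finset.sum_comm]
    exact Finset.sum_congr rfl fun i _ => (balance i (add_sub_cancel _ _)).symm
  · rw [Finset.sum_comm (f := fun i j => A i j * Real.exp (p i - p j))]
    exact Finset.sum_congr rfl fun i _ => balance i (sub_add_cancel _ _)
end

section
/- For every p ∈ ℝⁿ and every value p_{n+1} ∈ ℝ of the artificial coordinate, min{ θ((p, p_{n+1}), μ, a, b) : (μ, a, b) ∈ ℝ³ } = θ̃(p), i.e. the partial minimization of the effective HOTS dual function over (μ, a, b) has the closed form θ̃(p) = C(α) + (1−α)·log(Σ_{i=1}^n e^{−p_i}) + (1−α)·log(Σ_{i=1}^n e^{p_i}) + (2α−1)·log(Σ_{i,j=1}^n A_{ij} e^{p_i − p_j}), where C(α) = 1 − 2(1−α)log(1−α) − (2α−1)log(2α−1); in particular this value does not depend on p_{n+1}. -/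
open BigOperators

/-- The effective HOTS dual function. -/
noncomputable def effDual {n : ℕ} (A : Matrix (Fin n) (Fin n) ℝ) (α : ℝ)
    (p : Fin (n + 1) → ℝ) (μ a b : ℝ) : ℝ :=
  (∑ i : Fin n, ∑ j : Fin n, A i j * Real.exp (p i.castSucc - p j.castSucc + μ))
    + (∑ i : Fin n, Real.exp (-b - p (Fin.last n) + p i.castSucc + μ))
    + (∑ j : Fin n, Real.exp (a + p (Fin.last n) - p j.castSucc + μ))
    - (1 - α) * a - μ + (1 - α) * b

/-- The partially minimized dual function
`θ̃(p) = C(α) + (1−α) log Σ e^{−p_i} + (1−α) log Σ e^{p_i} + (2α−1) log Σ A_{ij} e^{p_i−p_j}`,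
where `C(α) = 1 − 2(1−α)log(1−α) − (2α−1)log(2α−1)`. -/
noncomputable def tildeTheta {n : ℕ} (A : Matrix (Fin n) (Fin n) ℝ) (α : ℝ)
    (p : Fin n → ℝ) : ℝ :=
  (1 - 2 * (1 - α) * Real.log (1 - α) - (2 * α - 1) * Real.log (2 * α - 1))
    + (1 - α) * Real.log (∑ i, Real.exp (-(p i)))
    + (1 - α) * Real.log (∑ i, Real.exp (p i))
    + (2 * α - 1) * Real.log (∑ i, ∑ j, A i j * Real.exp (p i - p j))

/-!
In the variables `μ`, `v = -b - t + μ` and `w = a + t + μ`, where `t = p_{n+1}`, the dual function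
is a sum of three one-variable functions of the shape `u ↦ S * exp u - c * u`, and `t` cancels from
the linear part. Each of them is minimized at `u = log (c / S)`, because substituting
`u = x + log (c / S)` turns it into `c * (exp x - x)` up to a constant and `x + 1 ≤ exp x`.
-/

open scoped Pointwise

/-- The function `u ↦ S * exp u - c * u`, the shape of each of the three summands into which the
dual function splits; `S` is a partition sum and `c` the slope paired with it. -/
noncomputable def expSubLinear (S c u : ℝ) : ℝ :=
  S * Real.exp u - c * u

lemma expSubLinear_log_div {S c : ℝ} (hS : 0 < S) (hc : 0 < c) :
    expSubLinear S c (Real.log (c / S)) = c - c * Real.log (c / S) := by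
  rw [expSubLinear, Real.exp_log (div_pos hc hS), mul_div_cancel₀ c hS.ne']

lemma expSubLinear_add_log_div {S c : ℝ} (hS : 0 < S) (hc : 0 < c) (x : ℝ) :
    expSubLinear S c (x + Real.log (c / S)) =
      c * (Real.exp x - x) - c * Real.log (c / S) := by
  rw [expSubLinear, Real.exp_add, Real.exp_log (div_pos hc hS)]
  field_simp
  ring

lemma isLeast_range_expSubLinear {S c : ℝ} (hS : 0 < S) (hc : 0 < c) :
    IsLeast (Set.range (expSubLinear S c)) (c - c * Real.log (c / S)) := by
  refine ⟨⟨_, expSubLinear_log_div hS hc⟩, ?_⟩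
  rintro _ ⟨u, rfl⟩
  obtain ⟨x, rfl⟩ : ∃ x, u = x + Real.log (c / S) := ⟨_, (sub_add_cancel u _).symm⟩
  have one_le : 1 ≤ Real.exp x - x := by linarith [Real.add_one_le_exp x]
  rw [expSubLinear_add_log_div hS hc]
  gcongr
  exact le_mul_of_one_le_right hc.le one_le

lemma isLeast_add {M : Type*} [Add M] [Preorder M] [AddLeftMono M] [AddRightMono M]
    {s t : Set M} {x y : M} (hx : IsLeast s x) (hy : IsLeast t y) : IsLeast (s + t) (x + y) :=
  ⟨Set.add_mem_add hx.1 hy.1, add_mem_lowerBounds_add hx.2 hy.2⟩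

lemma sum_sum_mul_pos {ι κ R : Type*} [Fintype ι] [Fintype κ] [Semiring R] [PartialOrder R]
    [IsStrictOrderedRing R] {A : Matrix ι κ R} {w : ι → κ → R}
    (hA : ∀ i j, 0 ≤ A i j) (hA0 : A ≠ 0) (hw : ∀ i j, 0 < w i j) :
    0 < ∑ i, ∑ j, A i j * w i j := by
  obtain ⟨i₀, j₀, hne⟩ : ∃ i j, A i j ≠ 0 := by
    by_contra! h
    exact hA0 (Matrix.ext h)
  have hterm (i : ι) (j : κ) : 0 ≤ A i j * w i j := mul_nonneg (hA i j) (hw i j).le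
  have hpos : 0 < A i₀ j₀ * w i₀ j₀ := mul_pos ((hA i₀ j₀).lt_of_ne' hne) (hw i₀ j₀)
  exact Finset.sum_pos' (fun i _ => Finset.sum_nonneg fun j _ => hterm i j)
    ⟨i₀, Finset.mem_univ _, Finset.sum_pos' (fun j _ => hterm i₀ j) ⟨j₀, Finset.mem_univ _, hpos⟩⟩

section Decoupling

variable {n : ℕ} (A : Matrix (Fin n) (Fin n) ℝ) (α : ℝ) (q : Fin n → ℝ)

lemma effDual_snoc (t μ a b : ℝ) :
    effDual A α (Fin.snoc q t) μ a b =
      expSubLinear (∑ i, ∑ j, A i j * Real.exp (q i - q j)) (2 * α - 1) μ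
        + expSubLinear (∑ i, Real.exp (q i)) (1 - α) (-b - t + μ)
        + expSubLinear (∑ i, Real.exp (-(q i))) (1 - α) (a + t + μ) := by
  have hout (i : Fin n) : Real.exp (-b - t + q i + μ) = Real.exp (q i) * Real.exp (-b - t + μ) := by
    rw [← Real.exp_add]
    ring_nf
  have hin (j : Fin n) : Real.exp (a + t - q j + μ) = Real.exp (-(q j)) * Real.exp (a + t + μ) := by
    rw [← Real.exp_add]
    ring_nf
  simp only [effDual, expSubLinear, Fin.snoc_castSucc, Fin.snoc_last, hout, hin,
    Real.exp_add _ μ, ← mul_assoc, ← Finset.sum_mul]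
  ring

lemma range_effDual_snoc (t : ℝ) :
    (Set.range fun z : ℝ × ℝ × ℝ => effDual A α (Fin.snoc q t) z.1 z.2.1 z.2.2) =
      Set.range (expSubLinear (∑ i, ∑ j, A i j * Real.exp (q i - q j)) (2 * α - 1))
        + Set.range (expSubLinear (∑ i, Real.exp (q i)) (1 - α))
        + Set.range (expSubLinear (∑ i, Real.exp (-(q i))) (1 - α)) := by
  simp only [effDual_snoc]
  apply Set.Subset.antisymm
  · rintro _ ⟨⟨μ, a, b⟩, rfl⟩
    exact Set.add_mem_add (Set.add_mem_add ⟨μ, rfl⟩ ⟨-b - t + μ, rfl⟩) ⟨a + t + μ, rfl⟩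
  · rintro _ ⟨_, ⟨_, ⟨μ, rfl⟩, _, ⟨v, rfl⟩, rfl⟩, _, ⟨w, rfl⟩, rfl⟩
    have hv : -(μ - t - v) - t + μ = v := by ring
    have hw : w - t - μ + t + μ = w := by ring
    exact ⟨(μ, w - t - μ, μ - t - v), by simp only [hv, hw]⟩

variable {A α q}

lemma tildeTheta_eq_sum_minima (hd : 2 * α - 1 ≠ 0) (hc : 1 - α ≠ 0)
    (hS : ∑ i, ∑ j, A i j * Real.exp (q i - q j) ≠ 0)
    (hP : ∑ i, Real.exp (q i) ≠ 0) (hM : ∑ i, Real.exp (-(q i)) ≠ 0) :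
    tildeTheta A α q =
      ((2 * α - 1) - (2 * α - 1) *
          Real.log ((2 * α - 1) / ∑ i, ∑ j, A i j * Real.exp (q i - q j)))
        + ((1 - α) - (1 - α) * Real.log ((1 - α) / ∑ i, Real.exp (q i)))
        + ((1 - α) - (1 - α) * Real.log ((1 - α) / ∑ i, Real.exp (-(q i)))) := by
  rw [Real.log_div hd hS, Real.log_div hc hP, Real.log_div hc hM, tildeTheta]
  ring

end Decoupling

theorem effDual_partial_min_closed_form_general {n : ℕ} (A : Matrix (Fin n) (Fin n) ℝ)
    (α : ℝ) (hα₁ : 1 / 2 < α) (hα₂ : α < 1) (q : Fin n → ℝ)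
    (hS : 0 < ∑ i, ∑ j, A i j * Real.exp (q i - q j)) (t : ℝ) :
    IsLeast
      (Set.range fun z : ℝ × ℝ × ℝ => effDual A α (Fin.snoc q t) z.1 z.2.1 z.2.2)
      (tildeTheta A α q) := by
  obtain ⟨i₀, -, -⟩ := Finset.exists_ne_zero_of_sum_ne_zero hS.ne'
  have hP : 0 < ∑ i, Real.exp (q i) :=
    Finset.sum_pos (fun i _ => Real.exp_pos (q i)) ⟨i₀, Finset.mem_univ i₀⟩
  have hM : 0 < ∑ i, Real.exp (-(q i)) :=
    Finset.sum_pos (fun i _ => Real.exp_pos (-(q i))) ⟨i₀, Finset.mem_univ i₀⟩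
  have hd : 0 < 2 * α - 1 := by linarith
  have hc : 0 < 1 - α := by linarith
  rw [range_effDual_snoc, tildeTheta_eq_sum_minima hd.ne' hc.ne' hS.ne' hP.ne' hM.ne']
  exact isLeast_add
    (isLeast_add (isLeast_range_expSubLinear hS hd) (isLeast_range_expSubLinear hP hc))
    (isLeast_range_expSubLinear hM hc)

/-- The minimum of `θ((p, p_{n+1}), μ, a, b)` over the multipliers `(μ, a, b)` is attained
and equals `θ̃(p)`; in particular it does not depend on `p_{n+1}`. -/
theorem effDual_partial_min_closed_form {n : ℕ} (A : Matrix (Fin n) (Fin n) ℝ)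
    (hA : ∀ i j, 0 ≤ A i j) (hA0 : A ≠ 0) (α : ℝ) (hα₁ : 1 / 2 < α) (hα₂ : α < 1)
    (q : Fin n → ℝ) (t : ℝ) :
    IsLeast
      (Set.range fun z : ℝ × ℝ × ℝ => effDual A α (Fin.snoc q t) z.1 z.2.1 z.2.2)
      (tildeTheta A α q) :=
  effDual_partial_min_closed_form_general A α hα₁ hα₂ q
    (sum_sum_mul_pos hA hA0 fun _ _ => Real.exp_pos _) t
end

section
/- Let d ∈ ℝⁿ with d_i > 0 for every i. Then θ̃ is strictly convex on the hyperplane H = { x ∈ ℝⁿ : Σ_{i=1}^n d_i x_i = 0 }. In particular, θ̃ has at most one global minimizer on H, and hence at most one minimizer on ℝⁿ up to addition of a constant multiple of the all-ones vector. -/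
open BigOperators

/-!
The weighted log-sum-exp function is convex because subtracting constants from its two arguments
normalizes both exponential sums to `1`, after which convexity is that of `exp`. Equality forces the
normalized arguments to agree wherever the weight is positive, i.e. the original arguments to differ
by a constant there. Up to a constant, `θ̃` is a nonnegative combination of log-sum-exps of linear
functions of `p`, and the term in `∑ exp (p i)` has full support and a positive coefficient. So `θ̃`
is strictly convex along every segment not parallel to the all-ones vector, and the hyperplane
contains no segment parallel to it because `∑ d i ≠ 0`.
-/

section LogSumExp

variable {ι : Type*} [Fintype ι] {w u v : ι → ℝ} {a b : ℝ}

/-- The log-sum-exp function with weights `w`. It is meaningful for `0 < w`, that is, for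
nonnegative weights that are not all zero; otherwise the logarithm may take junk values. -/
noncomputable def logSumExp (w u : ι → ℝ) : ℝ :=
  Real.log (∑ i, w i * Real.exp (u i))

lemma sum_mul_exp_pos_s11 (hw : 0 < w) (u : ι → ℝ) : 0 < ∑ i, w i * Real.exp (u i) := by
  obtain ⟨hw_nonneg, k, hk⟩ := Pi.lt_def.mp hw
  exact Finset.sum_pos' (fun i _ => mul_nonneg (hw_nonneg i) (Real.exp_pos _).le)
    ⟨k, Finset.mem_univ k, mul_pos hk (Real.exp_pos _)⟩

lemma mul_exp_convexComb_le {r : ℝ} (hr : 0 ≤ r) (s t : ℝ) (ha : 0 ≤ a) (hb : 0 ≤ b)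
    (hab : a + b = 1) :
    r * Real.exp (a * s + b * t) ≤ r * (a * Real.exp s + b * Real.exp t) :=
  mul_le_mul_of_nonneg_left (convexOn_exp.2 (Set.mem_univ s) (Set.mem_univ t) ha hb hab) hr

lemma sum_mul_convexComb (w f g : ι → ℝ) (a b : ℝ) :
    ∑ i, w i * (a * f i + b * g i) = a * ∑ i, w i * f i + b * ∑ i, w i * g i := by
  simp only [mul_add, Finset.sum_add_distrib, Finset.mul_sum, mul_left_comm]

lemma sum_mul_exp_convexComb_le (hw : 0 ≤ w) (u v : ι → ℝ) (ha : 0 ≤ a) (hb : 0 ≤ b)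
    (hab : a + b = 1) :
    ∑ i, w i * Real.exp ((a • u + b • v) i) ≤
      a * ∑ i, w i * Real.exp (u i) + b * ∑ i, w i * Real.exp (v i) := by
  rw [← sum_mul_convexComb]
  exact Finset.sum_le_sum fun i _ => mul_exp_convexComb_le (hw i) (u i) (v i) ha hb hab

lemma sum_mul_exp_convexComb_lt (hw : 0 ≤ w) {k : ι} (hk : 0 < w k) (huv : u k ≠ v k)
    (ha : 0 < a) (hb : 0 < b) (hab : a + b = 1) :
    ∑ i, w i * Real.exp ((a • u + b • v) i) <
      a * ∑ i, w i * Real.exp (u i) + b * ∑ i, w i * Real.exp (v i) := by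
  rw [← sum_mul_convexComb]
  exact Finset.sum_lt_sum
    (fun i _ => mul_exp_convexComb_le (hw i) (u i) (v i) ha.le hb.le hab)
    ⟨k, Finset.mem_univ k, mul_lt_mul_of_pos_left
      (strictConvexOn_exp.2 (Set.mem_univ _) (Set.mem_univ _) huv ha hb hab) hk⟩

lemma logSumExp_sub_const (hw : 0 < w) (u : ι → ℝ) (c : ℝ) :
    logSumExp w (u - fun _ => c) = logSumExp w u - c := by
  simp only [logSumExp, Pi.sub_apply, Real.exp_sub, ← mul_div_assoc, ← Finset.sum_div]
  rw [Real.log_div (sum_mul_exp_pos_s11 hw u).ne' (Real.exp_ne_zero c), Real.log_exp]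

lemma sum_mul_exp_sub_logSumExp (hw : 0 < w) (u : ι → ℝ) :
    ∑ i, w i * Real.exp ((u - fun _ => logSumExp w u : ι → ℝ) i) = 1 := by
  refine Real.eq_one_of_pos_of_log_eq_zero (sum_mul_exp_pos_s11 hw _) ?_
  exact (logSumExp_sub_const hw u _).trans (sub_self _)

lemma logSumExp_normalized_convexComb (hw : 0 < w) (u v : ι → ℝ) (a b : ℝ) :
    logSumExp w (a • (u - fun _ => logSumExp w u) + b • (v - fun _ => logSumExp w v)) =
      logSumExp w (a • u + b • v) - (a * logSumExp w u + b * logSumExp w v) := by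
  rw [← logSumExp_sub_const hw]
  congr 1
  ext i
  simp only [Pi.add_apply, Pi.sub_apply, Pi.smul_apply, smul_eq_mul]
  ring

lemma convexOn_logSumExp (hw : 0 < w) : ConvexOn ℝ Set.univ (logSumExp w) := by
  refine ⟨convex_univ, fun u _ v _ a b ha hb hab => ?_⟩
  have hsum := sum_mul_exp_convexComb_le hw.le
    (u - fun _ => logSumExp w u) (v - fun _ => logSumExp w v) ha hb hab
  rw [sum_mul_exp_sub_logSumExp hw, sum_mul_exp_sub_logSumExp hw, mul_one, mul_one, hab] at hsum
  rw [smul_eq_mul, smul_eq_mul, ← sub_nonpos, ← logSumExp_normalized_convexComb hw]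
  exact Real.log_nonpos (sum_mul_exp_pos_s11 hw _).le hsum

lemma logSumExp_convexComb_lt (hw : 0 ≤ w) {i j : ι} (hi : 0 < w i) (hj : 0 < w j)
    (huv : u i - v i ≠ u j - v j) (ha : 0 < a) (hb : 0 < b) (hab : a + b = 1) :
    logSumExp w (a • u + b • v) < a * logSumExp w u + b * logSumExp w v := by
  have hw_pos : 0 < w := Pi.lt_def.mpr ⟨hw, i, hi⟩
  obtain ⟨k, hk, hne⟩ : ∃ k, 0 < w k ∧ u k - logSumExp w u ≠ v k - logSumExp w v := by
    by_contra! h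
    exact huv (by linarith [h i hi, h j hj])
  have hsum := sum_mul_exp_convexComb_lt (u := u - fun _ => logSumExp w u)
    (v := v - fun _ => logSumExp w v) hw hk hne ha hb hab
  rw [sum_mul_exp_sub_logSumExp hw_pos, sum_mul_exp_sub_logSumExp hw_pos, mul_one, mul_one,
    hab] at hsum
  rw [← sub_neg, ← logSumExp_normalized_convexComb hw_pos]
  exact Real.log_neg (sum_mul_exp_pos_s11 hw_pos _) hsum

lemma convexOn_logSumExp_sub {B : Matrix ι ι ℝ}
    (hB : ∀ i j, 0 ≤ B i j) (hB0 : B ≠ 0) :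
    ConvexOn ℝ Set.univ fun p : ι → ℝ =>
      logSumExp (fun k : ι × ι => B k.1 k.2) (fun k => p k.1 - p k.2) := by
  have hpos : 0 < fun k : ι × ι => B k.1 k.2 :=
    lt_of_le_of_ne (fun k => hB k.1 k.2)
      fun h => hB0 (Matrix.ext fun i j => (congrFun h (i, j)).symm)
  exact (convexOn_logSumExp hpos).comp_linearMap
    (LinearMap.funLeft ℝ ℝ Prod.fst - LinearMap.funLeft ℝ ℝ Prod.snd)

end LogSumExp

section ConstantTranslates

variable {ι : Type*}

lemma exists_sub_ne_sub_of_forall_ne_add_const {G : Type*} [AddCommGroup G] {x y : ι → G}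
    (h : ∀ c : G, y ≠ x + fun _ => c) : ∃ i j, x i - y i ≠ x j - y j := by
  obtain ⟨k, -⟩ := Function.ne_iff.mp (h 0)
  by_contra! hconst
  refine h (y k - x k) (funext fun i => ?_)
  rw [Pi.add_apply, ← neg_sub (x k), hconst k i]
  abel

variable [Fintype ι]

lemma convex_setOf_sum_mul_eq_zero (d : ι → ℝ) : Convex ℝ {x : ι → ℝ | ∑ i, d i * x i = 0} :=
  convex_hyperplane (f := (d ⬝ᵥ ·)) ⟨dotProduct_add d, fun c => dotProduct_smul c d⟩ 0

lemma eq_zero_of_sum_mul_add_const_eq_zero {R : Type*} [Semiring R] [NoZeroDivisors R]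
    {d x : ι → R} {c : R} (hd : ∑ i, d i ≠ 0) (hx : ∑ i, d i * x i = 0)
    (hxc : ∑ i, d i * (x i + c) = 0) : c = 0 := by
  simp only [mul_add, Finset.sum_add_distrib, hx, zero_add, ← Finset.sum_mul] at hxc
  exact (mul_eq_zero.mp hxc).resolve_left hd

end ConstantTranslates

section TildeTheta

variable {n : ℕ} {A : Matrix (Fin n) (Fin n) ℝ} {α : ℝ}

lemma tildeTheta_eq_logSumExp (A : Matrix (Fin n) (Fin n) ℝ) (α : ℝ) (p : Fin n → ℝ) :
    tildeTheta A α p =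
      (1 - 2 * (1 - α) * Real.log (1 - α) - (2 * α - 1) * Real.log (2 * α - 1))
        + (1 - α) * logSumExp 1 (-p)
        + (1 - α) * logSumExp 1 p
        + (2 * α - 1) *
          logSumExp (fun k : Fin n × Fin n => A k.1 k.2) (fun k => p k.1 - p k.2) := by
  simp only [tildeTheta, logSumExp, Fintype.sum_prod_type, Pi.one_apply, Pi.neg_apply, one_mul]

lemma tildeTheta_convexComb_lt (hA : ∀ i j, 0 ≤ A i j) (hA0 : A ≠ 0) (hα₁ : 1 / 2 ≤ α)
    (hα₂ : α < 1) {x y : Fin n → ℝ} (hxy : ∀ c : ℝ, y ≠ x + fun _ => c) {a b : ℝ}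
    (ha : 0 < a) (hb : 0 < b) (hab : a + b = 1) :
    tildeTheta A α (a • x + b • y) < a * tildeTheta A α x + b * tildeTheta A α y := by
  obtain ⟨i, j, hij⟩ := exists_sub_ne_sub_of_forall_ne_add_const hxy
  have hone : (0 : Fin n → ℝ) < 1 := Pi.lt_def.mpr ⟨zero_le_one, i, one_pos⟩
  have hneg := ((convexOn_logSumExp hone).comp_linearMap (-LinearMap.id)).2
    (Set.mem_univ x) (Set.mem_univ y) ha.le hb.le hab
  have hid := logSumExp_convexComb_lt hone.le (i := i) (j := j) one_pos one_pos hij ha hb hab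
  have hsub := (convexOn_logSumExp_sub hA hA0).2
    (Set.mem_univ x) (Set.mem_univ y) ha.le hb.le hab
  simp only [Function.comp_apply, LinearMap.neg_apply, LinearMap.id_apply, smul_eq_mul]
    at hneg hsub
  simp only [tildeTheta_eq_logSumExp]
  have hneg' := mul_le_mul_of_nonneg_left hneg (by linarith : 0 ≤ 1 - α)
  have hid' := mul_lt_mul_of_pos_left hid (by linarith : 0 < 1 - α)
  have hsub' := mul_le_mul_of_nonneg_left hsub (by linarith : 0 ≤ 2 * α - 1)
  obtain rfl : b = 1 - a := by linarith
  linarith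

lemma strictConvexOn_tildeTheta (hA : ∀ i j, 0 ≤ A i j) (hA0 : A ≠ 0) (hα₁ : 1 / 2 ≤ α)
    (hα₂ : α < 1) {s : Set (Fin n → ℝ)} (hs : Convex ℝ s)
    (hs_const : ∀ x ∈ s, ∀ c : ℝ, (x + fun _ => c) ∈ s → c = 0) :
    StrictConvexOn ℝ s (tildeTheta A α) := by
  refine ⟨hs, fun x hx y hy hne a b ha hb hab => ?_⟩
  refine tildeTheta_convexComb_lt hA hA0 hα₁ hα₂ (fun c hyx => hne ?_) ha hb hab
  rw [hyx, hs_const x hx c (hyx ▸ hy)]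
  exact (add_zero x).symm

lemma exists_eq_add_const_of_tildeTheta_minimizers (hA : ∀ i j, 0 ≤ A i j) (hA0 : A ≠ 0)
    (hα₁ : 1 / 2 ≤ α) (hα₂ : α < 1) {x y : Fin n → ℝ}
    (hx : ∀ z, tildeTheta A α x ≤ tildeTheta A α z)
    (hy : ∀ z, tildeTheta A α y ≤ tildeTheta A α z) :
    ∃ c : ℝ, y = x + fun _ => c := by
  by_contra! hxy
  have hmid := tildeTheta_convexComb_lt hA hA0 hα₁ hα₂ hxy one_half_pos one_half_pos
    (add_halves 1)
  linarith [hx ((1 / 2 : ℝ) • x + (1 / 2 : ℝ) • y), hy x]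

end TildeTheta

theorem tildeTheta_strictConvexOn_hyperplane_general {n : ℕ} (A : Matrix (Fin n) (Fin n) ℝ)
    (hA : ∀ i j, 0 ≤ A i j) (hA0 : A ≠ 0) (α : ℝ) (hα₁ : 1 / 2 ≤ α) (hα₂ : α < 1)
    (d : Fin n → ℝ) (hd : ∑ i, d i ≠ 0) :
    StrictConvexOn ℝ {x : Fin n → ℝ | ∑ i, d i * x i = 0} (tildeTheta A α) ∧
    (∀ x y : Fin n → ℝ, (∑ i, d i * x i = 0) → (∑ i, d i * y i = 0) →
      (∀ z : Fin n → ℝ, (∑ i, d i * z i = 0) → tildeTheta A α x ≤ tildeTheta A α z) →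
      (∀ z : Fin n → ℝ, (∑ i, d i * z i = 0) → tildeTheta A α y ≤ tildeTheta A α z) →
      x = y) ∧
    (∀ x y : Fin n → ℝ,
      (∀ z : Fin n → ℝ, tildeTheta A α x ≤ tildeTheta A α z) →
      (∀ z : Fin n → ℝ, tildeTheta A α y ≤ tildeTheta A α z) →
      ∃ c : ℝ, y = x + fun _ => c) := by
  have hconvex : StrictConvexOn ℝ {x : Fin n → ℝ | ∑ i, d i * x i = 0} (tildeTheta A α) :=
    strictConvexOn_tildeTheta hA hA0 hα₁ hα₂ (convex_setOf_sum_mul_eq_zero d)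
      fun _ hx _ hxc => eq_zero_of_sum_mul_add_const_eq_zero hd hx hxc
  exact ⟨hconvex,
    fun _ _ hx hy hx_min hy_min => hconvex.eq_of_isMinOn hx_min hy_min hx hy,
    fun _ _ => exists_eq_add_const_of_tildeTheta_minimizers hA hA0 hα₁ hα₂⟩

/-- `θ̃` is strictly convex on the hyperplane `H = {x : Σ d_i x_i = 0}` (for any positive
weights `d`); hence it has at most one minimizer on `H`, and at most one minimizer on `ℝⁿ`
up to addition of a constant multiple of the all-ones vector. -/
theorem tildeTheta_strictConvexOn_hyperplane {n : ℕ} (A : Matrix (Fin n) (Fin n) ℝ)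
    (hA : ∀ i j, 0 ≤ A i j) (hA0 : A ≠ 0) (α : ℝ) (hα₁ : 1 / 2 < α) (hα₂ : α < 1)
    (d : Fin n → ℝ) (hd : ∀ i, 0 < d i) :
    StrictConvexOn ℝ {x : Fin n → ℝ | ∑ i, d i * x i = 0} (tildeTheta A α) ∧
    (∀ x y : Fin n → ℝ, (∑ i, d i * x i = 0) → (∑ i, d i * y i = 0) →
      (∀ z : Fin n → ℝ, (∑ i, d i * z i = 0) → tildeTheta A α x ≤ tildeTheta A α z) →
      (∀ z : Fin n → ℝ, (∑ i, d i * z i = 0) → tildeTheta A α y ≤ tildeTheta A α z) →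
      x = y) ∧
    (∀ x y : Fin n → ℝ,
      (∀ z : Fin n → ℝ, tildeTheta A α x ≤ tildeTheta A α z) →
      (∀ z : Fin n → ℝ, tildeTheta A α y ≤ tildeTheta A α z) →
      ∃ c : ℝ, y = x + fun _ => c) := by
  obtain ⟨i, -⟩ := Function.ne_iff.mp hA0
  exact tildeTheta_strictConvexOn_hyperplane_general A hA hA0 α hα₁.le hα₂ d
    (Finset.sum_pos (fun i _ => hd i) ⟨i, Finset.mem_univ i⟩).ne'
end

section
/- For every p ∈ ℝ^{n+1}, the effective HOTS iteration does not increase the optimal dual value: θ(p', λ(p')) ≤ θ(p, λ(p)), where p' = f^{λ(p)}(p), f^λ is the map defined for fixed (μ, a, b) by f^λ_i(p) = (1/2)·(log(Σ_{j=1}^n A_{ji} e^{p_j} + e^{a + p_{n+1}}) − log(Σ_{k=1}^n A_{ik} e^{−p_k} + e^{−b − p_{n+1}})) for i ≤ n and f^λ_{n+1}(p) = (1/2)·(log(Σ_{j=1}^n e^{−b + p_j}) − log(Σ_{k=1}^n e^{a − p_k})), and θ(q, λ(q)) denotes θ evaluated at q and at the unique minimizing multipliers λ(q). -/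
open BigOperators

/-- `σ(p) = Σ_{i,j} A_{ij} e^{p_i − p_j}`. -/
noncomputable def sigmaP {n : ℕ} (A : Matrix (Fin n) (Fin n) ℝ) (p : Fin (n + 1) → ℝ) : ℝ :=
  ∑ i : Fin n, ∑ j : Fin n, A i j * Real.exp (p i.castSucc - p j.castSucc)

/-- The optimal multiplier `μ(p)`. -/
noncomputable def muOpt {n : ℕ} (A : Matrix (Fin n) (Fin n) ℝ) (α : ℝ)
    (p : Fin (n + 1) → ℝ) : ℝ :=
  Real.log ((2 * α - 1) / sigmaP A p)

/-- The optimal multiplier `a(p)`. -/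
noncomputable def aOpt {n : ℕ} (A : Matrix (Fin n) (Fin n) ℝ) (α : ℝ)
    (p : Fin (n + 1) → ℝ) : ℝ :=
  Real.log ((1 - α) / (2 * α - 1) * sigmaP A p /
    ∑ j : Fin n, Real.exp (p (Fin.last n) - p j.castSucc))

/-- The optimal multiplier `b(p)`. -/
noncomputable def bOpt {n : ℕ} (A : Matrix (Fin n) (Fin n) ℝ) (α : ℝ)
    (p : Fin (n + 1) → ℝ) : ℝ :=
  -Real.log ((1 - α) / (2 * α - 1) * sigmaP A p /
    ∑ i : Fin n, Real.exp (p i.castSucc - p (Fin.last n)))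

/-- The fixed-multiplier map `f^λ` for `λ = (μ, a, b)` (it only depends on `a`, `b`). -/
noncomputable def fLam {n : ℕ} (A : Matrix (Fin n) (Fin n) ℝ) (a b : ℝ)
    (p : Fin (n + 1) → ℝ) : Fin (n + 1) → ℝ :=
  Fin.lastCases
    ((1 / 2) * (Real.log (∑ j : Fin n, Real.exp (-b + p j.castSucc))
      - Real.log (∑ k : Fin n, Real.exp (a - p k.castSucc))))
    (fun i => (1 / 2) *
      (Real.log ((∑ j : Fin n, A j i * Real.exp (p j.castSucc))
          + Real.exp (a + p (Fin.last n)))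
        - Real.log ((∑ k : Fin n, A i k * Real.exp (-(p k.castSucc)))
          + Real.exp (-b - p (Fin.last n)))))

/-!
With the multipliers fixed, the dual is, up to an additive constant, `exp μ` times the total flow
`∑ B_{ij} exp (p_i - p_j)` of the matrix `B` obtained by bordering `A` with the extra node.
In this form `f^λ` is a step of diagonal balancing: `exp (2 p'_i) = c_i / r_i`, where `c` and `r`
collect the weights entering and leaving `i`. By the arithmetic-geometric mean inequality
`2 exp (x_i - x_j) ≤ exp (2 x_i - p_i - p_j) + exp (p_i + p_j - 2 x_j)`, the total flow at `x` is
at most a surrogate that separates over the nodes, and at `x = p'` the surrogate equals the total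
flow at `p`. Hence the step does not increase the dual with `λ` fixed. Replacing `λ` by `λ(p')` then
cannot increase it either, because in the coordinates `μ`, `μ - b`, `μ + a` the dual
is a sum of three functions `t ↦ S exp t - w t`, each minimized at `log (w / S)`.
-/

section RealExp

lemma exp_sub_le_exp_add_exp_div_two (x y m : ℝ) :
    Real.exp (x - y) ≤ (Real.exp (2 * x - m) + Real.exp (m - 2 * y)) / 2 := by
  have hconv := convexOn_exp.2 (Set.mem_univ (2 * x - m)) (Set.mem_univ (m - 2 * y))
    (by norm_num : (0 : ℝ) ≤ 1 / 2) (by norm_num : (0 : ℝ) ≤ 1 / 2) (by norm_num)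
  simp only [smul_eq_mul] at hconv
  calc Real.exp (x - y) = Real.exp (1 / 2 * (2 * x - m) + 1 / 2 * (m - 2 * y)) := by ring_nf
    _ ≤ 1 / 2 * Real.exp (2 * x - m) + 1 / 2 * Real.exp (m - 2 * y) := hconv
    _ = (Real.exp (2 * x - m) + Real.exp (m - 2 * y)) / 2 := by ring

lemma mul_exp_sub_mul_log_div_le {S w : ℝ} (hS : 0 < S) (hw : 0 < w) (t : ℝ) :
    S * Real.exp (Real.log (w / S)) - w * Real.log (w / S) ≤ S * Real.exp t - w * t := by
  set t₀ := Real.log (w / S)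
  have hmin : S * Real.exp t₀ = w := by
    rw [Real.exp_log (div_pos hw hS), mul_div_cancel₀ _ hS.ne']
  have hshift : S * Real.exp t = w * Real.exp (t - t₀) := by
    rw [← hmin, mul_assoc, ← Real.exp_add, add_sub_cancel]
  have htangent : w * (t - t₀ + 1) ≤ w * Real.exp (t - t₀) :=
    mul_le_mul_of_nonneg_left (Real.add_one_le_exp _) hw.le
  linarith

lemma sum_exp_pos {ι : Type*} [Fintype ι] [Nonempty ι] (f : ι → ℝ) : 0 < ∑ i, Real.exp (f i) :=
  Finset.sum_pos (fun _ _ => Real.exp_pos _) Finset.univ_nonempty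

end RealExp

section Balancing

variable {ι : Type*} [Fintype ι] {B : Matrix ι ι ℝ}

/-- The total flow of the weighted graph `B` under the potential `q`, where the arc `i → j`
carries the flow `B i j * exp (q i - q j)`. -/
noncomputable def totalFlow (B : Matrix ι ι ℝ) (q : ι → ℝ) : ℝ :=
  ∑ i, ∑ j, B i j * Real.exp (q i - q j)

/-- The weight entering node `i`: the flow into `i` with its factor `exp (-q i)` removed. -/
noncomputable def inWeight (B : Matrix ι ι ℝ) (q : ι → ℝ) (i : ι) : ℝ :=
  ∑ j, B j i * Real.exp (q j)

/-- The weight leaving node `i`: the flow out of `i` with its factor `exp (q i)` removed. -/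
noncomputable def outWeight (B : Matrix ι ι ℝ) (q : ι → ℝ) (i : ι) : ℝ :=
  ∑ k, B i k * Real.exp (-q k)

/-- The simultaneous balancing step: each node moves to the potential that would equalize the flow
into it and the flow out of it if the other nodes did not move. -/
noncomputable def balancingStep (B : Matrix ι ι ℝ) (q : ι → ℝ) (i : ι) : ℝ :=
  1 / 2 * (Real.log (inWeight B q i) - Real.log (outWeight B q i))

lemma totalFlow_pos (hB : ∀ i j, 0 ≤ B i j) (hB0 : B ≠ 0) (q : ι → ℝ) : 0 < totalFlow B q := by
  obtain ⟨i, j, hij⟩ : ∃ i j, B i j ≠ 0 := by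
    by_contra! hzero
    exact hB0 (Matrix.ext hzero)
  have hterm : ∀ k l, 0 ≤ B k l * Real.exp (q k - q l) :=
    fun k l => mul_nonneg (hB k l) (Real.exp_pos _).le
  refine Finset.sum_pos' (fun k _ => Finset.sum_nonneg fun l _ => hterm k l)
    ⟨i, Finset.mem_univ i, ?_⟩
  exact Finset.sum_pos' (fun l _ => hterm i l)
    ⟨j, Finset.mem_univ j, mul_pos ((hB i j).lt_of_ne' hij) (Real.exp_pos _)⟩

lemma inWeight_pos (hB : ∀ i j, 0 ≤ B i j) (q : ι → ℝ) {i : ι} (hi : ∃ j, 0 < B j i) :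
    0 < inWeight B q i := by
  obtain ⟨j, hj⟩ := hi
  exact Finset.sum_pos' (fun k _ => mul_nonneg (hB k i) (Real.exp_pos _).le)
    ⟨j, Finset.mem_univ j, mul_pos hj (Real.exp_pos _)⟩

lemma outWeight_pos (hB : ∀ i j, 0 ≤ B i j) (q : ι → ℝ) {i : ι} (hi : ∃ j, 0 < B i j) :
    0 < outWeight B q i :=
  inWeight_pos (B := B.transpose) (fun k l => hB l k) (-q) hi

lemma sum_exp_mul_outWeight (B : Matrix ι ι ℝ) (q f : ι → ℝ) :
    ∑ i, Real.exp (f i) * outWeight B q i = ∑ i, ∑ j, B i j * Real.exp (f i - q j) := by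
  simp only [outWeight, Finset.mul_sum, sub_eq_add_neg, Real.exp_add, mul_left_comm]

lemma sum_exp_neg_mul_inWeight (B : Matrix ι ι ℝ) (q f : ι → ℝ) :
    ∑ j, Real.exp (-f j) * inWeight B q j = ∑ i, ∑ j, B i j * Real.exp (q i - f j) := by
  rw [Finset.sum_comm]
  simp only [inWeight, mul_comm (Real.exp (-f _)), Finset.sum_mul, mul_assoc, sub_eq_add_neg,
    Real.exp_add]

lemma totalFlow_le_surrogate (hB : ∀ i j, 0 ≤ B i j) (q x : ι → ℝ) :
    totalFlow B x ≤ (∑ i, Real.exp (2 * x i - q i) * outWeight B q i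
      + ∑ j, Real.exp (-(2 * x j - q j)) * inWeight B q j) / 2 := by
  rw [sum_exp_mul_outWeight B q fun i => 2 * x i - q i,
    sum_exp_neg_mul_inWeight B q fun j => 2 * x j - q j]
  simp only [totalFlow, ← Finset.sum_add_distrib, Finset.sum_div]
  refine Finset.sum_le_sum fun i _ => Finset.sum_le_sum fun j _ => ?_
  calc B i j * Real.exp (x i - x j)
      ≤ B i j * ((Real.exp (2 * x i - (q i + q j)) + Real.exp (q i + q j - 2 * x j)) / 2) :=
        mul_le_mul_of_nonneg_left (exp_sub_le_exp_add_exp_div_two _ _ _) (hB i j)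
    _ = (B i j * Real.exp (2 * x i - q i - q j)
          + B i j * Real.exp (q i - (2 * x j - q j))) / 2 := by ring_nf

lemma exp_two_mul_balancingStep {q : ι → ℝ} {i : ι} (hin : 0 < inWeight B q i)
    (hout : 0 < outWeight B q i) :
    Real.exp (2 * balancingStep B q i) = inWeight B q i / outWeight B q i := by
  rw [balancingStep, ← mul_assoc, mul_one_div_cancel two_ne_zero, one_mul, Real.exp_sub,
    Real.exp_log hin, Real.exp_log hout]

theorem totalFlow_balancingStep_le (hB : ∀ i j, 0 ≤ B i j) (hcol : ∀ i, ∃ j, 0 < B j i)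
    (hrow : ∀ i, ∃ j, 0 < B i j) (q : ι → ℝ) :
    totalFlow B (balancingStep B q) ≤ totalFlow B q := by
  have hin i : 0 < inWeight B q i := inWeight_pos hB q (hcol i)
  have hout i : 0 < outWeight B q i := outWeight_pos hB q (hrow i)
  have hswap_out i : Real.exp (2 * balancingStep B q i - q i) * outWeight B q i
      = Real.exp (-q i) * inWeight B q i := by
    rw [sub_eq_add_neg, Real.exp_add, exp_two_mul_balancingStep (hin i) (hout i)]
    field_simp [(hout i).ne']
  have hswap_in i : Real.exp (-(2 * balancingStep B q i - q i)) * inWeight B q i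
      = Real.exp (q i) * outWeight B q i := by
    rw [neg_sub, Real.exp_sub, exp_two_mul_balancingStep (hin i) (hout i)]
    field_simp [(hin i).ne', (hout i).ne']
  calc totalFlow B (balancingStep B q)
      ≤ (∑ i, Real.exp (2 * balancingStep B q i - q i) * outWeight B q i
          + ∑ i, Real.exp (-(2 * balancingStep B q i - q i)) * inWeight B q i) / 2 :=
        totalFlow_le_surrogate hB q _
    _ = (∑ i, Real.exp (-q i) * inWeight B q i + ∑ i, Real.exp (q i) * outWeight B q i) / 2 := by
        simp only [hswap_out, hswap_in]
    _ = (totalFlow B q + totalFlow B q) / 2 := by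
        rw [sum_exp_neg_mul_inWeight, sum_exp_mul_outWeight, totalFlow]
    _ = totalFlow B q := add_self_div_two _

end Balancing

section EffectiveGraph

variable {n : ℕ} {A : Matrix (Fin n) (Fin n) ℝ}

/-- The weights of the effective graph: `A` bordered by a last node, which receives weight `e^{-b}`
from every node and sends weight `e^a` to every node. Its total flow is the part of `effDual` that
depends on the potential, up to the factor `e^μ`. -/
noncomputable def effMatrix (A : Matrix (Fin n) (Fin n) ℝ) (a b : ℝ) :
    Matrix (Fin (n + 1)) (Fin (n + 1)) ℝ :=
  Fin.snoc (α := fun _ => Fin (n + 1) → ℝ)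
    (fun i => Fin.snoc (α := fun _ => ℝ) (A i) (Real.exp (-b)))
    (Fin.snoc (α := fun _ => ℝ) (fun _ => Real.exp a) 0)

@[simp]
lemma effMatrix_castSucc_castSucc (A : Matrix (Fin n) (Fin n) ℝ) (a b : ℝ) (i j : Fin n) :
    effMatrix A a b i.castSucc j.castSucc = A i j := by
  simp [effMatrix]

@[simp]
lemma effMatrix_castSucc_last (A : Matrix (Fin n) (Fin n) ℝ) (a b : ℝ) (i : Fin n) :
    effMatrix A a b i.castSucc (Fin.last n) = Real.exp (-b) := by
  simp [effMatrix]

@[simp]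
lemma effMatrix_last_castSucc (A : Matrix (Fin n) (Fin n) ℝ) (a b : ℝ) (j : Fin n) :
    effMatrix A a b (Fin.last n) j.castSucc = Real.exp a := by
  simp [effMatrix]

@[simp]
lemma effMatrix_last_last (A : Matrix (Fin n) (Fin n) ℝ) (a b : ℝ) :
    effMatrix A a b (Fin.last n) (Fin.last n) = 0 := by
  simp [effMatrix]

lemma effMatrix_nonneg (hA : ∀ i j, 0 ≤ A i j) (a b : ℝ) (i j : Fin (n + 1)) :
    0 ≤ effMatrix A a b i j := by
  induction i using Fin.lastCases <;> induction j using Fin.lastCases <;>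
    simp [Real.exp_nonneg, hA]

lemma exists_effMatrix_col_pos [NeZero n] (A : Matrix (Fin n) (Fin n) ℝ) (a b : ℝ)
    (i : Fin (n + 1)) : ∃ j, 0 < effMatrix A a b j i := by
  cases i using Fin.lastCases with
  | last => exact ⟨Fin.castSucc 0, by rw [effMatrix_castSucc_last]; exact Real.exp_pos _⟩
  | cast i => exact ⟨Fin.last n, by simp [Real.exp_pos]⟩

lemma exists_effMatrix_row_pos [NeZero n] (A : Matrix (Fin n) (Fin n) ℝ) (a b : ℝ)
    (i : Fin (n + 1)) : ∃ j, 0 < effMatrix A a b i j := by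
  cases i using Fin.lastCases with
  | last => exact ⟨Fin.castSucc 0, by rw [effMatrix_last_castSucc]; exact Real.exp_pos _⟩
  | cast i => exact ⟨Fin.last n, by simp [Real.exp_pos]⟩

lemma totalFlow_effMatrix (A : Matrix (Fin n) (Fin n) ℝ) (a b : ℝ) (p : Fin (n + 1) → ℝ) :
    totalFlow (effMatrix A a b) p = sigmaP A p
      + Real.exp (-b) * ∑ i : Fin n, Real.exp (p i.castSucc - p (Fin.last n))
      + Real.exp a * ∑ j : Fin n, Real.exp (p (Fin.last n) - p j.castSucc) := by
  simp [totalFlow, sigmaP, Fin.sum_univ_castSucc, Finset.sum_add_distrib, Finset.mul_sum,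
    add_right_comm]

lemma fLam_eq_balancingStep (A : Matrix (Fin n) (Fin n) ℝ) (a b : ℝ) (p : Fin (n + 1) → ℝ) :
    fLam A a b p = balancingStep (effMatrix A a b) p := by
  funext i
  cases i using Fin.lastCases <;>
    simp [fLam, balancingStep, inWeight, outWeight, Fin.sum_univ_castSucc, sub_eq_add_neg,
      Real.exp_add]

lemma effDual_eq_totalFlow (A : Matrix (Fin n) (Fin n) ℝ) (α : ℝ) (p : Fin (n + 1) → ℝ)
    (μ a b : ℝ) :
    effDual A α p μ a b = Real.exp μ * totalFlow (effMatrix A a b) p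
      - (1 - α) * a - μ + (1 - α) * b := by
  have hintoLast i : -b - p (Fin.last n) + p (Fin.castSucc i) + μ
      = μ + (-b + (p i.castSucc - p (Fin.last n))) := by ring
  have hfromLast j : a + p (Fin.last n) - p (Fin.castSucc j) + μ
      = μ + (a + (p (Fin.last n) - p j.castSucc)) := by ring
  simp only [effDual, totalFlow_effMatrix, sigmaP, hintoLast, hfromLast, add_comm _ μ,
    Real.exp_add, mul_add, Finset.mul_sum, mul_left_comm (A _ _)]

theorem effDual_fLam_le [NeZero n] (hA : ∀ i j, 0 ≤ A i j) (α : ℝ) (p : Fin (n + 1) → ℝ)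
    (μ a b : ℝ) : effDual A α (fLam A a b p) μ a b ≤ effDual A α p μ a b := by
  rw [effDual_eq_totalFlow, effDual_eq_totalFlow, fLam_eq_balancingStep]
  gcongr
  exact totalFlow_balancingStep_le (effMatrix_nonneg hA a b) (exists_effMatrix_col_pos A a b)
    (exists_effMatrix_row_pos A a b) p

end EffectiveGraph

section OptimalMultipliers

variable {n : ℕ} {A : Matrix (Fin n) (Fin n) ℝ} {α : ℝ} {p : Fin (n + 1) → ℝ}

lemma sigmaP_pos (hA : ∀ i j, 0 ≤ A i j) (hA0 : A ≠ 0) (p : Fin (n + 1) → ℝ) : 0 < sigmaP A p :=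
  totalFlow_pos hA hA0 fun i => p i.castSucc

lemma neZero_of_sigmaP_ne_zero (hσ : sigmaP A p ≠ 0) : NeZero n where
  out := by
    rintro rfl
    exact hσ (Finset.sum_of_isEmpty _)

lemma effDual_eq_separated (A : Matrix (Fin n) (Fin n) ℝ) (α : ℝ) (p : Fin (n + 1) → ℝ)
    (μ a b : ℝ) :
    effDual A α p μ a b = (sigmaP A p * Real.exp μ - (2 * α - 1) * μ)
      + ((∑ i : Fin n, Real.exp (p i.castSucc - p (Fin.last n))) * Real.exp (μ - b)
        - (1 - α) * (μ - b))
      + ((∑ j : Fin n, Real.exp (p (Fin.last n) - p j.castSucc)) * Real.exp (μ + a)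
        - (1 - α) * (μ + a)) := by
  rw [effDual_eq_totalFlow, totalFlow_effMatrix, sub_eq_add_neg μ b, Real.exp_add, Real.exp_add]
  ring

lemma muOpt_add_log_div (hα : 2 * α - 1 ≠ 0) (hα' : 1 - α ≠ 0) (hσ : sigmaP A p ≠ 0) {S : ℝ}
    (hS : S ≠ 0) :
    muOpt A α p + Real.log ((1 - α) / (2 * α - 1) * sigmaP A p / S) = Real.log ((1 - α) / S) := by
  rw [muOpt, ← Real.log_mul (by positivity) (by positivity)]
  congr 1
  field_simp

lemma muOpt_sub_bOpt (hα : 2 * α - 1 ≠ 0) (hα' : 1 - α ≠ 0) (hσ : sigmaP A p ≠ 0) :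
    muOpt A α p - bOpt A α p
      = Real.log ((1 - α) / ∑ i : Fin n, Real.exp (p i.castSucc - p (Fin.last n))) := by
  have := neZero_of_sigmaP_ne_zero hσ
  rw [bOpt, sub_neg_eq_add, muOpt_add_log_div hα hα' hσ (sum_exp_pos _).ne']

lemma muOpt_add_aOpt (hα : 2 * α - 1 ≠ 0) (hα' : 1 - α ≠ 0) (hσ : sigmaP A p ≠ 0) :
    muOpt A α p + aOpt A α p
      = Real.log ((1 - α) / ∑ j : Fin n, Real.exp (p (Fin.last n) - p j.castSucc)) := by
  have := neZero_of_sigmaP_ne_zero hσ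
  rw [aOpt, muOpt_add_log_div hα hα' hσ (sum_exp_pos _).ne']

theorem effDual_optMultipliers_le (hα₁ : 1 / 2 < α) (hα₂ : α < 1) (hσ : 0 < sigmaP A p)
    (μ a b : ℝ) :
    effDual A α p (muOpt A α p) (aOpt A α p) (bOpt A α p) ≤ effDual A α p μ a b := by
  have := neZero_of_sigmaP_ne_zero hσ.ne'
  have hw : 0 < 2 * α - 1 := by linarith
  have hw' : 0 < 1 - α := by linarith
  rw [effDual_eq_separated, effDual_eq_separated, muOpt_sub_bOpt hw.ne' hw'.ne' hσ.ne',
    muOpt_add_aOpt hw.ne' hw'.ne' hσ.ne', muOpt]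
  gcongr ?_ + ?_ + ?_
  · exact mul_exp_sub_mul_log_div_le hσ hw μ
  · exact mul_exp_sub_mul_log_div_le (sum_exp_pos _) hw' (μ - b)
  · exact mul_exp_sub_mul_log_div_le (sum_exp_pos _) hw' (μ + a)

theorem effHots_step_decreases_dual_general (hA : ∀ i j, 0 ≤ A i j) (hA0 : A ≠ 0)
    (hα₁ : 1 / 2 < α) (hα₂ : α < 1) (p : Fin (n + 1) → ℝ) (μ a b : ℝ) :
    effDual A α (fLam A a b p) (muOpt A α (fLam A a b p)) (aOpt A α (fLam A a b p))
      (bOpt A α (fLam A a b p)) ≤ effDual A α p μ a b := by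
  have := neZero_of_sigmaP_ne_zero (sigmaP_pos hA hA0 p).ne'
  calc effDual A α (fLam A a b p) (muOpt A α (fLam A a b p)) (aOpt A α (fLam A a b p))
        (bOpt A α (fLam A a b p))
      ≤ effDual A α (fLam A a b p) μ a b :=
        effDual_optMultipliers_le hα₁ hα₂ (sigmaP_pos hA hA0 _) μ a b
    _ ≤ effDual A α p μ a b := effDual_fLam_le hA α p μ a b

end OptimalMultipliers

/-- One step of the effective HOTS iteration does not increase the optimal dual value:
`θ(p', λ(p')) ≤ θ(p, λ(p))` where `p' = f^{λ(p)}(p)`. -/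
theorem effHots_step_decreases_dual {n : ℕ} (A : Matrix (Fin n) (Fin n) ℝ)
    (hA : ∀ i j, 0 ≤ A i j) (hA0 : A ≠ 0) (α : ℝ) (hα₁ : 1 / 2 < α) (hα₂ : α < 1)
    (p : Fin (n + 1) → ℝ) :
    effDual A α (fLam A (aOpt A α p) (bOpt A α p) p)
        (muOpt A α (fLam A (aOpt A α p) (bOpt A α p) p))
        (aOpt A α (fLam A (aOpt A α p) (bOpt A α p) p))
        (bOpt A α (fLam A (aOpt A α p) (bOpt A α p) p)) ≤
      effDual A α p (muOpt A α p) (aOpt A α p) (bOpt A α p) := by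
  exact effHots_step_decreases_dual_general hA hA0 hα₁ hα₂ p _ _ _
end
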